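/- arXiv:1810.08926 — 3 statements merged into one kernel-verified Lean document; each statement's English description precedes it below -/
import Mathlib

section
/- (Theorem 1) Let A : ℝ^k → ℝ^ℓ be a linear map between finite-dimensional real inner product spaces, let w ∈ ℝ^k with ‖w‖ = 1, and let K ⊆ ℝ^k be a bounded set with diameter diam K. Define σ(A) := inf { ‖A v‖ : v ∈ (ker A)^⊥, ‖v‖ = 1 } and assume σ(A) > 0. If μT, μL ∈ K satisfy ‖A(μT − μL)‖ < ε for some ε > 0, then |⟪w, μT − μL⟫| < ε/σ(A) + ρ(A; w) · diam K. -/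
open scoped RealInnerProductSpace

/-- The teaching risk of a worldview `A` with respect to reward weights `w`:
`ρ(A; w) = sup { ⟪w, v⟫ : v ∈ ker A, ‖v‖ ≤ 1 }`. -/
noncomputable def teachingRisk {k : ℕ} {F : Type*} [AddCommGroup F] [Module ℝ F]
    (A : EuclideanSpace ℝ (Fin k) →ₗ[ℝ] F) (w : EuclideanSpace ℝ (Fin k)) : ℝ :=
  sSup {r : ℝ | ∃ v ∈ LinearMap.ker A, ‖v‖ ≤ 1 ∧ r = ⟪w, v⟫}

/-- `σ(A) = inf { ‖A v‖ : v ∈ (ker A)ᗮ, ‖v‖ = 1 }`. -/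
noncomputable def sigmaMin {k l : ℕ}
    (A : EuclideanSpace ℝ (Fin k) →ₗ[ℝ] EuclideanSpace ℝ (Fin l)) : ℝ :=
  sInf {r : ℝ | ∃ v ∈ (LinearMap.ker A)ᗮ, ‖v‖ = 1 ∧ r = ‖A v‖}

theorem theorem1_guarantee_bounded_risk {k l : ℕ}
    (A : EuclideanSpace ℝ (Fin k) →ₗ[ℝ] EuclideanSpace ℝ (Fin l))
    (w : EuclideanSpace ℝ (Fin k)) (hw : ‖w‖ = 1)
    (K : Set (EuclideanSpace ℝ (Fin k))) (hK : Bornology.IsBounded K)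
    (hσ : 0 < sigmaMin A)
    (μT μL : EuclideanSpace ℝ (Fin k)) (hμT : μT ∈ K) (hμL : μL ∈ K)
    (ε : ℝ) (hε : 0 < ε) (h : ‖A (μT - μL)‖ < ε) :
    |⟪w, μT - μL⟫| < ε / sigmaMin A + teachingRisk A w * Metric.diam K := by
  have hbdd : BddAbove {r : ℝ | ∃ v ∈ LinearMap.ker A, ‖v‖ ≤ 1 ∧ r = ⟪w, v⟫} := by
    refine ⟨1, ?_⟩
    rintro r ⟨v, -, hv, rfl⟩
    calc ⟪w, v⟫ ≤ ‖w‖ * ‖v‖ := real_inner_le_norm w v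
      _ ≤ 1 := by rw [hw, one_mul]; exact hv
  have hρ : ∀ v ∈ LinearMap.ker A, ‖v‖ ≤ 1 → ⟪w, v⟫ ≤ teachingRisk A w :=
    fun v hv hv1 => le_csSup hbdd ⟨v, hv, hv1, rfl⟩
  have hρ0 : 0 ≤ teachingRisk A w := by
    simpa using hρ 0 (Submodule.zero_mem _) (by simp)
  have hρ1 : ∀ v ∈ LinearMap.ker A, ⟪w, v⟫ ≤ teachingRisk A w * ‖v‖ := by
    intro v hv
    by_cases h0 : v = 0
    · simp [h0]
    have hn : 0 < ‖v‖ := norm_pos_iff.mpr h0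
    have h1 := hρ (‖v‖⁻¹ • v) (Submodule.smul_mem _ _ hv)
      (by rw [norm_smul, norm_inv, norm_norm, inv_mul_cancel₀ hn.ne'])
    rw [real_inner_smul_right, inv_mul_le_iff₀ hn] at h1
    linarith
  have hσ1 : ∀ v ∈ (LinearMap.ker A)ᗮ, sigmaMin A * ‖v‖ ≤ ‖A v‖ := by
    intro v hv
    by_cases h0 : v = 0
    · simp [h0]
    have hn : 0 < ‖v‖ := norm_pos_iff.mpr h0
    have h1 : sigmaMin A ≤ ‖A (‖v‖⁻¹ • v)‖ := by
      refine csInf_le ⟨0, ?_⟩ ⟨‖v‖⁻¹ • v, Submodule.smul_mem _ _ hv, ?_, rfl⟩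
      · rintro r ⟨v, -, -, rfl⟩
        exact norm_nonneg _
      · rw [norm_smul, norm_inv, norm_norm, inv_mul_cancel₀ hn.ne']
    rw [map_smul, norm_smul, norm_inv, norm_norm, le_inv_mul_iff₀ hn] at h1
    linarith
  have hxd : ‖μT - μL‖ ≤ Metric.diam K := by
    rw [← dist_eq_norm]
    exact Metric.dist_le_diam_of_mem hK hμT hμL
  generalize μT - μL = x at *
  obtain ⟨p, hp, q, hq, rfl⟩ := (LinearMap.ker A).exists_add_mem_mem_orthogonal x
  have hpq : ⟪p, q⟫ = 0 := Submodule.inner_right_of_mem_orthogonal hp hq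
  have hpn : ‖p‖ ≤ ‖p + q‖ := by
    have h2 := norm_add_sq_eq_norm_sq_add_norm_sq_real hpq
    nlinarith [norm_nonneg p, norm_nonneg (p + q), mul_self_nonneg ‖q‖]
  have hA : A (p + q) = A q := by rw [map_add, LinearMap.mem_ker.mp hp, zero_add]
  rw [hA] at h
  have hqn : ‖q‖ < ε / sigmaMin A := by
    rw [lt_div_iff₀ hσ]
    have := hσ1 q hq
    linarith
  have hwp : |⟪w, p⟫| ≤ teachingRisk A w * ‖p‖ := by
    rw [abs_le]
    have h1 := hρ1 p hp
    have h2 := hρ1 (-p) (Submodule.neg_mem _ hp)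
    rw [inner_neg_right, norm_neg] at h2
    constructor <;> linarith
  have hwq : |⟪w, q⟫| ≤ ‖q‖ := by
    have := abs_real_inner_le_norm w q
    rwa [hw, one_mul] at this
  have hle := mul_le_mul_of_nonneg_left (hpn.trans hxd) hρ0
  rw [inner_add_right]
  have := abs_add_le ⟪w, p⟫ ⟪w, q⟫
  linarith
end

section
/- (Proposition 1, precise form) Let A : ℝ^k → ℝ^ℓ be a linear map between finite-dimensional real inner product spaces, let w ∈ ℝ^k with ‖w‖ = 1, let K ⊆ ℝ^k, and let μ* ∈ K be a maximizer of μ ↦ ⟪w, μ⟫ over K. Assume the supporting normal of K at μ* is unique, i.e. for every unit vector u ∈ ℝ^k, if ⟪u, μ⟫ ≤ ⟪u, μ*⟫ for all μ ∈ K then u = w. If ρ(A; w) > 0, then for every wL ∈ ℝ^ℓ with A* wL ≠ 0 there exists μ ∈ K with ⟪wL, A μ⟫ > ⟪wL, A μ*⟫; that is, μ* is suboptimal for every nondegenerate reward function linear in the learner's observed features. -/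
open scoped RealInnerProductSpace

theorem prop1_optimal_policy_suboptimal_for_learner {k l : ℕ}
    (A : EuclideanSpace ℝ (Fin k) →ₗ[ℝ] EuclideanSpace ℝ (Fin l))
    (w : EuclideanSpace ℝ (Fin k)) (hw : ‖w‖ = 1)
    (K : Set (EuclideanSpace ℝ (Fin k)))
    (μstar : EuclideanSpace ℝ (Fin k)) (hμstar : μstar ∈ K)
    (hmax : ∀ μ ∈ K, ⟪w, μ⟫ ≤ ⟪w, μstar⟫)
    (hunique : ∀ u : EuclideanSpace ℝ (Fin k), ‖u‖ = 1 →
      (∀ μ ∈ K, ⟪u, μ⟫ ≤ ⟪u, μstar⟫) → u = w)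
    (hρ : 0 < teachingRisk A w) :
    ∀ wL : EuclideanSpace ℝ (Fin l), LinearMap.adjoint A wL ≠ 0 →
      ∃ μ ∈ K, ⟪wL, A μstar⟫ < ⟪wL, A μ⟫ := by
  intro wL hne
  by_contra! hcon
  have hn : ‖LinearMap.adjoint A wL‖ ≠ 0 := norm_ne_zero_iff.mpr hne
  have hpos : 0 < ‖LinearMap.adjoint A wL‖ := norm_pos_iff.mpr hne
  have hu := hunique ((‖LinearMap.adjoint A wL‖)⁻¹ • LinearMap.adjoint A wL)
    (by rw [norm_smul, norm_inv, norm_norm, inv_mul_cancel₀ hn])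
    (by
      intro μ hμ
      rw [real_inner_smul_left, real_inner_smul_left, LinearMap.adjoint_inner_left,
        LinearMap.adjoint_inner_left]
      exact mul_le_mul_of_nonneg_left (hcon μ hμ) (inv_nonneg.mpr hpos.le))
  have hle : teachingRisk A w ≤ 0 := by
    unfold teachingRisk
    apply Real.sSup_nonpos
    rintro r ⟨v, hv, -, rfl⟩
    rw [← hu, real_inner_smul_left, LinearMap.adjoint_inner_left, LinearMap.mem_ker.mp hv]
    simp
  exact absurd hρ (not_lt.mpr hle)
end

section
/- (One-sided learner guarantee) Let A : ℝ^k → ℝ^ℓ be a linear map between finite-dimensional real inner product spaces, let w ∈ ℝ^k with ‖w‖ = 1, and let K ⊆ ℝ^k be a bounded set. Define σ(A) := inf { ‖A v‖ : v ∈ (ker A)^⊥, ‖v‖ = 1 } and assume σ(A) > 0. Suppose μ* ∈ K maximizes μ ↦ ⟪w, μ⟫ over K (the teacher's policy is optimal) and μL ∈ K satisfies ‖A(μ* − μL)‖ < ε. Then ⟪w, μ*⟫ − ⟪w, μL⟫ < ε/σ(A) + ρ(A; w) · diam K, and in particular ⟪w, μL⟫ > (sup over μ ∈ K of ⟪w,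 μ⟫) − ε/σ(A) − ρ(A; w) · diam K. -/
open scoped RealInnerProductSpace

theorem inner_le_teachingRisk_mul {k l : ℕ}
    (A : EuclideanSpace ℝ (Fin k) →ₗ[ℝ] EuclideanSpace ℝ (Fin l))
    (w : EuclideanSpace ℝ (Fin k)) :
    0 ≤ teachingRisk A w ∧ ∀ p ∈ LinearMap.ker A, ⟪w, p⟫ ≤ teachingRisk A w * ‖p‖ := by
  have hb : BddAbove {r : ℝ | ∃ v ∈ LinearMap.ker A, ‖v‖ ≤ 1 ∧ r = ⟪w, v⟫} := by
    refine ⟨‖w‖, ?_⟩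
    rintro r ⟨v, -, hv, rfl⟩
    calc ⟪w, v⟫ ≤ ‖w‖ * ‖v‖ := real_inner_le_norm w v
      _ ≤ ‖w‖ * 1 := by gcongr
      _ = ‖w‖ := mul_one _
  refine ⟨le_csSup hb ⟨0, Submodule.zero_mem _, by simp, by simp⟩, ?_⟩
  intro p hp
  by_cases h0 : p = 0
  · simp [h0]
  have hn : 0 < ‖p‖ := norm_pos_iff.mpr h0
  have h1 : ‖p‖⁻¹ * ⟪w, p⟫ ≤ teachingRisk A w := by
    refine le_csSup hb ⟨‖p‖⁻¹ • p, Submodule.smul_mem _ _ hp, ?_, ?_⟩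
    · rw [norm_smul, norm_inv, norm_norm, inv_mul_cancel₀ hn.ne']
    · rw [real_inner_smul_right]
  rw [← div_le_iff₀ hn, div_eq_inv_mul]
  exact h1

theorem sigmaMin_mul_norm_le {k l : ℕ}
    (A : EuclideanSpace ℝ (Fin k) →ₗ[ℝ] EuclideanSpace ℝ (Fin l))
    (q : EuclideanSpace ℝ (Fin k)) (hq : q ∈ (LinearMap.ker A)ᗮ) :
    sigmaMin A * ‖q‖ ≤ ‖A q‖ := by
  by_cases h0 : q = 0
  · simp [h0]
  have hn : 0 < ‖q‖ := norm_pos_iff.mpr h0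
  have h1 : sigmaMin A ≤ ‖q‖⁻¹ * ‖A q‖ := by
    refine csInf_le ⟨0, ?_⟩ ⟨‖q‖⁻¹ • q, Submodule.smul_mem _ _ hq, ?_, ?_⟩
    · rintro r ⟨v, -, -, rfl⟩
      exact norm_nonneg _
    · rw [norm_smul, norm_inv, norm_norm, inv_mul_cancel₀ hn.ne']
    · rw [map_smul, norm_smul, norm_inv, norm_norm]
  rw [← le_div_iff₀ hn, div_eq_inv_mul]
  exact h1

theorem one_sided_learner_guarantee {k l : ℕ}
    (A : EuclideanSpace ℝ (Fin k) →ₗ[ℝ] EuclideanSpace ℝ (Fin l))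
    (w : EuclideanSpace ℝ (Fin k)) (hw : ‖w‖ = 1)
    (K : Set (EuclideanSpace ℝ (Fin k))) (hK : Bornology.IsBounded K)
    (hσ : 0 < sigmaMin A)
    (μstar μL : EuclideanSpace ℝ (Fin k)) (hμstar : μstar ∈ K) (hμL : μL ∈ K)
    (hmax : ∀ μ ∈ K, ⟪w, μ⟫ ≤ ⟪w, μstar⟫)
    (ε : ℝ) (h : ‖A (μstar - μL)‖ < ε) :
    ⟪w, μstar⟫ - ⟪w, μL⟫ < ε / sigmaMin A + teachingRisk A w * Metric.diam K ∧
    sSup ((fun μ => ⟪w, μ⟫) '' K) - ε / sigmaMin A - teachingRisk A w * Metric.diam K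
      < ⟪w, μL⟫ := by
  have key : ⟪w, μstar⟫ - ⟪w, μL⟫ < ε / sigmaMin A + teachingRisk A w * Metric.diam K := by
    rw [← inner_sub_right]
    have hd : ‖μstar - μL‖ ≤ Metric.diam K := by
      rw [← dist_eq_norm]
      exact Metric.dist_le_diam_of_mem hK hμstar hμL
    obtain ⟨p, hp, q, hq, hpq⟩ :=
      Submodule.exists_add_mem_mem_orthogonal (K := LinearMap.ker A) (μstar - μL)
    rw [hpq] at h hd ⊢
    have hAp : A p = 0 := hp
    rw [map_add, hAp, zero_add] at h
    obtain ⟨hρ, hρp⟩ := inner_le_teachingRisk_mul A w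
    have h1 := hρp p hp
    have h2 := sigmaMin_mul_norm_le A q hq
    have hpyth := norm_add_sq_eq_norm_sq_add_norm_sq_real (hq p hp)
    have h3 : ‖p‖ ≤ ‖p + q‖ := by
      nlinarith [norm_nonneg p, norm_nonneg q, norm_nonneg (p + q), mul_self_nonneg ‖q‖]
    have h4 : teachingRisk A w * ‖p‖ ≤ teachingRisk A w * Metric.diam K :=
      mul_le_mul_of_nonneg_left (h3.trans hd) hρ
    have h5 : ⟪w, q⟫ ≤ ‖q‖ := by
      have := real_inner_le_norm w q
      rwa [hw, one_mul] at this
    have h6 : ‖q‖ < ε / sigmaMin A := by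
      rw [lt_div_iff₀ hσ, mul_comm]
      exact h2.trans_lt h
    rw [inner_add_right]
    linarith
  refine ⟨key, ?_⟩
  have hs : sSup ((fun μ => ⟪w, μ⟫) '' K) ≤ ⟪w, μstar⟫ := by
    refine csSup_le ⟨_, μstar, hμstar, rfl⟩ ?_
    rintro _ ⟨μ, hμ, rfl⟩
    exact hmax μ hμ
  linarith
end
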